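/- arXiv:2411.07051 — 2 statements merged into one kernel-verified Lean document; each statement's English description precedes it below -/
import Mathlib

section
/- Let x, y ∈ ℝ² with x ≠ y, where ℝ² carries the maximum metric d_m. Then there is a unique geodesic segment joining x to y in (ℝ², d_m) (i.e. any two unit-speed geodesics γ : [0, d_m(x,y)] → ℝ² with γ(0) = x and γ(d_m(x,y)) = y coincide) if and only if x and y lie on a common diagonal line L_{ε,a} for some ε ∈ {−1,1} and a ∈ ℝ. -/
open MeasureTheory

/-- The `p`-Wasserstein distance between two measures, defined as the infimum over all
couplings `π` of `μ` and `ν` of `(∬ d(x,y)^p dπ)^(1/p)`. -/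
noncomputable def Wdist {X : Type*} [MeasurableSpace X] [PseudoMetricSpace X] (p : ℝ)
    (μ ν : Measure X) : ℝ :=
  (⨅ π ∈ {π : Measure (X × X) | π.map Prod.fst = μ ∧ π.map Prod.snd = ν},
    (∫⁻ q, edist q.1 q.2 ^ p ∂π) ^ (1 / p)).toReal

/-- The `p`-Wasserstein space over `X`: Borel probability measures on `X` with finite
`p`-th moment. -/
def WSet (X : Type*) [MeasurableSpace X] [PseudoMetricSpace X] (p : ℝ) : Set (Measure X) :=
  {μ | IsProbabilityMeasure μ ∧ ∃ x₀ : X, ∫⁻ x, edist x x₀ ^ p ∂μ < ⊤}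

/-- An isometry of the underlying metric space: a distance-preserving bijection. -/
def IsIsom {X : Type*} [PseudoMetricSpace X] (T : X → X) : Prop :=
  Function.Bijective T ∧ ∀ x y, dist (T x) (T y) = dist x y

/-- An isometry of the `p`-Wasserstein space over `X`: a bijection of the space of
probability measures with finite `p`-th moment preserving the Wasserstein distance. -/
def IsWIsometry (X : Type*) [MeasurableSpace X] [PseudoMetricSpace X] (p : ℝ)
    (Φ : Measure X → Measure X) : Prop :=
  Set.BijOn Φ (WSet X p) (WSet X p) ∧
    ∀ μ ∈ WSet X p, ∀ ν ∈ WSet X p, Wdist p (Φ μ) (Φ ν) = Wdist p μ ν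

/-- The (topological) support of a measure. -/
def msupport {X : Type*} [TopologicalSpace X] [MeasurableSpace X] (μ : Measure X) : Set X :=
  {x | ∀ U : Set X, IsOpen U → x ∈ U → μ U ≠ 0}

def diagLine (ε a : ℝ) : Set (ℝ × ℝ) := {z | z.2 = ε * z.1 + a}

def Lplus : Set (ℝ × ℝ) := {z | z.2 = z.1}

def Lminus : Set (ℝ × ℝ) := {z | z.2 = -z.1}

/-- The closed square `Q = [-1,1]²`. -/
abbrev Qs : Set (ℝ × ℝ) := Set.Icc (-1, -1) (1, 1)

def LplusQ : Set ↥Qs := {q | (q : ℝ × ℝ).2 = (q : ℝ × ℝ).1}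

def LminusQ : Set ↥Qs := {q | (q : ℝ × ℝ).2 = -(q : ℝ × ℝ).1}


/-- A unit-speed geodesic segment of length `T` in `(ℝ², d_m)`. -/
def IsPtGeo (T : ℝ) (γ : ℝ → ℝ × ℝ) : Prop :=
  ∀ s ∈ Set.Icc (0 : ℝ) T, ∀ t ∈ Set.Icc (0 : ℝ) T, dist (γ s) (γ t) = |s - t|

/-!
A `1`-Lipschitz map that preserves the distance between the endpoints of a geodesic segment must
preserve all distances along it. If the two coordinates of `x` and `y` are equally far apart, both
projections are of this kind, so each coordinate of a geodesic is a geodesic, and geodesics of `ℝ`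
(or of any strictly convex space) are unique. If one coordinate distance is strictly smaller, that
coordinate only has to move at speed at most `1`, and it has time to spare for a detour.
-/

section GeodesicSegment

variable {X Y : Type*}

/-- `γ`, restricted to `[0, dist x y]`, is a unit-speed geodesic segment joining `x` to `y`. As in
`IsPtGeo`, the values of `γ` outside this interval are irrelevant. -/
structure IsGeodesicSegment [PseudoMetricSpace X] (x y : X) (γ : ℝ → X) : Prop where
  dist_eq : ∀ s ∈ Set.Icc 0 (dist x y), ∀ t ∈ Set.Icc 0 (dist x y), dist (γ s) (γ t) = |s - t|
  source : γ 0 = x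
  target : γ (dist x y) = y

/-- At most one geodesic segment joins `x` to `y`. Existence is not part of the notion; it is
automatic in normed spaces, see `isGeodesicSegment_lineMap`. -/
def GeodesicUnique [PseudoMetricSpace X] (x y : X) : Prop :=
  ∀ γ₁ γ₂ : ℝ → X, IsGeodesicSegment x y γ₁ → IsGeodesicSegment x y γ₂ →
    Set.EqOn γ₁ γ₂ (Set.Icc 0 (dist x y))

namespace IsGeodesicSegment

section PseudoMetricSpace

variable [PseudoMetricSpace X] [PseudoMetricSpace Y] {x y : X} {γ : ℝ → X}

theorem dist_source (hγ : IsGeodesicSegment x y γ) {t : ℝ} (ht : t ∈ Set.Icc 0 (dist x y)) :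
    dist x (γ t) = t := by
  have h := hγ.dist_eq 0 ⟨le_rfl, dist_nonneg⟩ t ht
  rwa [hγ.source, zero_sub, abs_neg, abs_of_nonneg ht.1] at h

theorem dist_target (hγ : IsGeodesicSegment x y γ) {t : ℝ} (ht : t ∈ Set.Icc 0 (dist x y)) :
    dist (γ t) y = dist x y - t := by
  have h := hγ.dist_eq t ht (dist x y) ⟨dist_nonneg, le_rfl⟩
  rwa [hγ.target, abs_sub_comm, abs_of_nonneg (sub_nonneg.2 ht.2)] at h

theorem map (hγ : IsGeodesicSegment x y γ) {φ : X → Y} (hφ : LipschitzWith 1 φ)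
    (hxy : dist (φ x) (φ y) = dist x y) : IsGeodesicSegment (φ x) (φ y) (φ ∘ γ) where
  source := congrArg φ hγ.source
  target := by rw [hxy, Function.comp_apply, hγ.target]
  dist_eq := by
    rw [hxy]
    intro s hs t ht
    wlog hst : s ≤ t generalizing s t
    · rw [dist_comm, abs_sub_comm]
      exact this t ht s hs (le_of_not_ge hst)
    have hφ_le (p q : X) : dist (φ p) (φ q) ≤ dist p q := by simpa using hφ.dist_le_mul p q
    have hγst : dist (γ s) (γ t) = t - s := by
      rw [hγ.dist_eq s hs t ht, abs_sub_comm, abs_of_nonneg (sub_nonneg.2 hst)]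
    rw [abs_sub_comm, abs_of_nonneg (sub_nonneg.2 hst)]
    refine le_antisymm ((hφ_le _ _).trans_eq hγst) ?_
    -- A shorter middle piece would make the image of `γ` too short to join `φ x` to `φ y`.
    have hchain : dist x y ≤ s + dist (φ (γ s)) (φ (γ t)) + (dist x y - t) :=
      calc dist x y = dist (φ x) (φ y) := hxy.symm
        _ ≤ dist (φ x) (φ (γ s)) + dist (φ (γ s)) (φ (γ t)) + dist (φ (γ t)) (φ y) :=
          dist_triangle4 _ _ _ _
        _ ≤ dist x (γ s) + dist (φ (γ s)) (φ (γ t)) + dist (γ t) y := by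
          gcongr <;> apply hφ_le
        _ = s + dist (φ (γ s)) (φ (γ t)) + (dist x y - t) := by
          rw [hγ.dist_source hs, hγ.dist_target ht]
    simp only [Function.comp_apply]
    linarith

theorem prodMk {x y : X × Y} {f : ℝ → X} {g : ℝ → Y} (hf : IsGeodesicSegment x.1 y.1 f)
    (hg : LipschitzOnWith 1 g (Set.Icc 0 (dist x.1 y.1))) (hg_source : g 0 = x.2)
    (hg_target : g (dist x.1 y.1) = y.2) : IsGeodesicSegment x y fun t ↦ (f t, g t) := by
  have hg_le {s t : ℝ} (hs : s ∈ Set.Icc 0 (dist x.1 y.1)) (ht : t ∈ Set.Icc 0 (dist x.1 y.1)) :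
      dist (g s) (g t) ≤ |s - t| := by
    simpa [Real.dist_eq] using hg.dist_le_mul s hs t ht
  have hsnd_le : dist x.2 y.2 ≤ dist x.1 y.1 := by
    simpa [hg_source, hg_target, abs_of_nonneg] using
      hg_le ⟨le_rfl, dist_nonneg⟩ ⟨dist_nonneg, le_rfl⟩
  have hdist : dist x y = dist x.1 y.1 := by rw [Prod.dist_eq, max_eq_left hsnd_le]
  refine ⟨fun s hs t ht ↦ ?_, Prod.ext hf.source hg_source, ?_⟩
  · rw [hdist] at hs ht
    rw [Prod.dist_eq, hf.dist_eq s hs t ht, max_eq_left (hg_le hs ht)]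
  · rw [hdist]
    exact Prod.ext hf.target hg_target

end PseudoMetricSpace

theorem eqOn_lineMap {E : Type*} [NormedAddCommGroup E] [NormedSpace ℝ E] [StrictConvexSpace ℝ E]
    {a b : E} {γ : ℝ → E} (hγ : IsGeodesicSegment a b γ) :
    Set.EqOn γ (fun t ↦ AffineMap.lineMap a b (t / dist a b)) (Set.Icc 0 (dist a b)) := by
  intro t ht
  have hscale : t / dist a b * dist a b = t :=
    div_mul_cancel_of_imp fun h ↦ le_antisymm (ht.2.trans_eq h) ht.1
  apply eq_lineMap_of_dist_eq_mul_of_dist_eq_mul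
  · rw [hγ.dist_source ht, hscale]
  · rw [hγ.dist_target ht, sub_mul, one_mul, hscale]

end IsGeodesicSegment

theorem isGeodesicSegment_lineMap {E : Type*} [NormedAddCommGroup E] [NormedSpace ℝ E] (a b : E) :
    IsGeodesicSegment a b fun t ↦ AffineMap.lineMap a b (t / dist a b) := by
  obtain rfl | hab := eq_or_ne a b
  · refine ⟨fun s hs t ht ↦ ?_, by simp, by simp⟩
    simp only [dist_self, Set.Icc_self, Set.mem_singleton_iff] at hs ht
    simp [hs, ht]
  · have hpos : 0 < dist a b := dist_pos.2 hab
    refine ⟨fun s _ t _ ↦ ?_, by simp, by simp [hpos.ne']⟩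
    rw [dist_lineMap_lineMap, Real.dist_eq, ← sub_div, abs_div, abs_of_pos hpos,
      div_mul_cancel₀ _ hpos.ne']

theorem geodesicUnique_of_strictConvexSpace {E : Type*} [NormedAddCommGroup E] [NormedSpace ℝ E]
    [StrictConvexSpace ℝ E] (a b : E) : GeodesicUnique a b :=
  fun _ _ h₁ h₂ ↦ h₁.eqOn_lineMap.trans h₂.eqOn_lineMap.symm

namespace GeodesicUnique

theorem of_isometry [MetricSpace X] [PseudoMetricSpace Y] {x y : X} {φ : X → Y} (hφ : Isometry φ)
    (h : GeodesicUnique (φ x) (φ y)) : GeodesicUnique x y := by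
  intro γ₁ γ₂ h₁ h₂ t ht
  have hdist := hφ.dist_eq x y
  exact hφ.injective (h _ _ (h₁.map hφ.lipschitz hdist) (h₂.map hφ.lipschitz hdist)
    (hdist.symm ▸ ht))

theorem swap [MetricSpace X] [MetricSpace Y] {x y : X × Y} (h : GeodesicUnique x y) :
    GeodesicUnique x.swap y.swap :=
  of_isometry (φ := Prod.swap) (Isometry.of_dist_eq fun _ _ ↦ max_comm _ _) h

theorem prod [PseudoMetricSpace X] [PseudoMetricSpace Y] {x y : X × Y}
    (h_fst : GeodesicUnique x.1 y.1) (h_snd : GeodesicUnique x.2 y.2)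
    (hdist : dist x.1 y.1 = dist x.2 y.2) : GeodesicUnique x y := by
  have hfst : dist x.1 y.1 = dist x y := by rw [Prod.dist_eq, hdist, max_self]
  have hsnd : dist x.2 y.2 = dist x y := hdist.symm.trans hfst
  intro γ₁ γ₂ h₁ h₂ t ht
  exact Prod.ext
    (h_fst _ _ (h₁.map .prod_fst hfst) (h₂.map .prod_fst hfst) (hfst.symm ▸ ht))
    (h_snd _ _ (h₁.map .prod_snd hsnd) (h₂.map .prod_snd hsnd) (hsnd.symm ▸ ht))

end GeodesicUnique

end GeodesicSegment

section Detour

variable {F : Type*} [NormedAddCommGroup F] [NormedSpace ℝ F] {D : ℝ}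

/-- The curve from `u` (at time `0`) to `v` (at time `D`) that follows the straight segment with
constant velocity, displaced by a multiple of `w` that grows at unit rate until time `D / 2` and
then shrinks back to zero. For `w = 0` it is the straight segment. -/
noncomputable def detour (D : ℝ) (u v w : F) (t : ℝ) : F :=
  AffineMap.lineMap u v (t / D) + min t (D - t) • w

theorem detour_zero (hD : 0 ≤ D) (u v w : F) : detour D u v w 0 = u := by
  simp [detour, hD]

theorem detour_self (hD : 0 < D) (u v w : F) : detour D u v w D = v := by
  simp [detour, hD.le, hD.ne']

theorem detour_half_injective (hD : 0 < D) (u v : F) :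
    Function.Injective fun w ↦ detour D u v w (D / 2) := by
  intro w₁ w₂ h
  have hsmul : (D / 2) • w₁ = (D / 2) • w₂ := by
    simpa [detour, sub_half] using h
  exact smul_right_injective F (half_pos hD).ne' hsmul

theorem lipschitzWith_min_sub (D : ℝ) : LipschitzWith 1 fun t : ℝ ↦ min t (D - t) := by
  refine LipschitzWith.mk_one fun s t ↦ (abs_min_sub_min_le_max _ _ _ _).trans_eq ?_
  rw [sub_sub_sub_cancel_left, abs_sub_comm t s, max_self, Real.dist_eq]

theorem lipschitzWith_detour (hD : 0 < D) {u v w : F} (h : dist u v / D + ‖w‖ ≤ 1) :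
    LipschitzWith 1 (detour D u v w) := by
  refine LipschitzWith.mk_one fun s t ↦ ?_
  have hline : dist (AffineMap.lineMap u v (s / D) : F) (AffineMap.lineMap u v (t / D)) =
      dist s t * (dist u v / D) := by
    rw [dist_lineMap_lineMap, Real.dist_eq, Real.dist_eq, ← sub_div, abs_div, abs_of_pos hD]
    ring
  have hbump : dist (min s (D - s) • w) (min t (D - t) • w) ≤ dist s t * ‖w‖ := by
    rw [dist_eq_norm, ← sub_smul, norm_smul, ← dist_eq_norm]
    gcongr
    simpa using (lipschitzWith_min_sub D).dist_le_mul s t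
  calc dist (detour D u v w s) (detour D u v w t)
      ≤ dist s t * (dist u v / D) + dist s t * ‖w‖ :=
        (dist_add_add_le _ _ _ _).trans (add_le_add hline.le hbump)
    _ = dist s t * (dist u v / D + ‖w‖) := by ring
    _ ≤ dist s t := mul_le_of_le_one_right dist_nonneg h

end Detour

theorem not_geodesicUnique_of_dist_snd_lt {X F : Type*} [PseudoMetricSpace X]
    [NormedAddCommGroup F] [NormedSpace ℝ F] [Nontrivial F] {x y : X × F} {f : ℝ → X}
    (hf : IsGeodesicSegment x.1 y.1 f) (h : dist x.2 y.2 < dist x.1 y.1) :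
    ¬ GeodesicUnique x y := by
  intro hunique
  have hdist : dist x y = dist x.1 y.1 := max_eq_left h.le
  have hD : 0 < dist x.1 y.1 := dist_nonneg.trans_lt h
  have hslack : 0 < 1 - dist x.2 y.2 / dist x.1 y.1 := sub_pos.2 ((div_lt_one hD).2 h)
  obtain ⟨w, hw⟩ := exists_norm_eq F hslack.le
  have hcurve (w' : F) (hw' : ‖w'‖ ≤ ‖w‖) :
      IsGeodesicSegment x y fun t ↦ (f t, detour (dist x.1 y.1) x.2 y.2 w' t) :=
    hf.prodMk (lipschitzWith_detour hD (by linarith)).lipschitzOnWith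
      (detour_zero hD.le _ _ _) (detour_self hD _ _ _)
  have hmid := hunique _ _ (hcurve w le_rfl) (hcurve 0 (by simp))
    (x := dist x.1 y.1 / 2) (by rw [hdist]; exact ⟨by positivity, half_le_self hD.le⟩)
  have hw_zero : w = 0 := detour_half_injective hD x.2 y.2 (congrArg Prod.snd hmid)
  exact hslack.ne' (by rw [← hw, hw_zero, norm_zero])

theorem unique_geodesic_iff_common_diagonal_general {E F : Type*}
    [NormedAddCommGroup E] [NormedSpace ℝ E] [StrictConvexSpace ℝ E] [Nontrivial E]
    [NormedAddCommGroup F] [NormedSpace ℝ F] [StrictConvexSpace ℝ F] [Nontrivial F]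
    (x y : E × F) : GeodesicUnique x y ↔ dist x.1 y.1 = dist x.2 y.2 := by
  refine ⟨fun hunique ↦ ?_,
    (geodesicUnique_of_strictConvexSpace _ _).prod (geodesicUnique_of_strictConvexSpace _ _)⟩
  obtain hlt | heq | hgt := lt_trichotomy (dist x.1 y.1) (dist x.2 y.2)
  · exact (not_geodesicUnique_of_dist_snd_lt (isGeodesicSegment_lineMap _ _) hlt
      hunique.swap).elim
  · exact heq
  · exact (not_geodesicUnique_of_dist_snd_lt (isGeodesicSegment_lineMap _ _) hgt hunique).elim

section Plane

variable (x y : ℝ × ℝ)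

theorem geodesicUnique_iff_forall_isPtGeo :
    GeodesicUnique x y ↔ ∀ γ₁ γ₂ : ℝ → ℝ × ℝ,
      IsPtGeo (dist x y) γ₁ → γ₁ 0 = x → γ₁ (dist x y) = y →
      IsPtGeo (dist x y) γ₂ → γ₂ 0 = x → γ₂ (dist x y) = y →
      ∀ t ∈ Set.Icc (0 : ℝ) (dist x y), γ₁ t = γ₂ t :=
  ⟨fun h γ₁ γ₂ hγ₁ hx₁ hy₁ hγ₂ hx₂ hy₂ ↦ h γ₁ γ₂ ⟨hγ₁, hx₁, hy₁⟩ ⟨hγ₂, hx₂, hy₂⟩,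
    fun h γ₁ γ₂ h₁ h₂ ↦ h γ₁ γ₂ h₁.dist_eq h₁.source h₁.target h₂.dist_eq h₂.source h₂.target⟩

theorem dist_fst_eq_dist_snd_iff_exists_mem_diagLine :
    dist x.1 y.1 = dist x.2 y.2 ↔
      ∃ ε a : ℝ, (ε = 1 ∨ ε = -1) ∧ x ∈ diagLine ε a ∧ y ∈ diagLine ε a := by
  simp only [Real.dist_eq, abs_eq_abs, diagLine, Set.mem_ofPred_eq]
  constructor
  · rintro (h | h)
    · exact ⟨1, x.2 - x.1, .inl rfl, by ring, by linarith⟩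
    · exact ⟨-1, x.2 + x.1, .inr rfl, by ring, by linarith⟩
  · rintro ⟨ε, a, rfl | rfl, hx, hy⟩
    · exact .inl (by linarith)
    · exact .inr (by linarith)

end Plane

/-- Two distinct points of `(ℝ², d_m)` are joined by a unique geodesic segment if and
only if they lie on a common diagonal line. -/
theorem unique_geodesic_iff_common_diagonal (x y : ℝ × ℝ) (hxy : x ≠ y) :
    (∀ γ₁ γ₂ : ℝ → ℝ × ℝ,
      IsPtGeo (dist x y) γ₁ → γ₁ 0 = x → γ₁ (dist x y) = y →
      IsPtGeo (dist x y) γ₂ → γ₂ 0 = x → γ₂ (dist x y) = y →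
      ∀ t ∈ Set.Icc (0 : ℝ) (dist x y), γ₁ t = γ₂ t) ↔
    (∃ ε a : ℝ, (ε = 1 ∨ ε = -1) ∧ x ∈ diagLine ε a ∧ y ∈ diagLine ε a) := by
  rw [← geodesicUnique_iff_forall_isPtGeo, ← dist_fst_eq_dist_snd_iff_exists_mem_diagLine]
  exact unique_geodesic_iff_common_diagonal_general x y
end

section
/- Let p ≥ 1 and let Φ : 𝒲_p(Q) → 𝒲_p(Q) be an isometry, where Q = [−1,1]² with the maximum metric. If μ, ν ∈ 𝒲_p(Q) have their supports contained in two opposite sides of Q, then the supports of Φ(μ) and Φ(ν) are also contained in two opposite sides of Q. -/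
open MeasureTheory

/-- The left, right, bottom, and top sides of `Q = [-1,1]²`. -/
def sideL : Set ↥Qs := {q | (q : ℝ × ℝ).1 = -1}
def sideR : Set ↥Qs := {q | (q : ℝ × ℝ).1 = 1}
def sideB : Set ↥Qs := {q | (q : ℝ × ℝ).2 = -1}
def sideT : Set ↥Qs := {q | (q : ℝ × ℝ).2 = 1}

/-- `A` and `B` are contained in two opposite sides of `Q`. -/
def OppSides (A B : Set ↥Qs) : Prop :=
  (A ⊆ sideL ∧ B ⊆ sideR) ∨ (A ⊆ sideR ∧ B ⊆ sideL) ∨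
  (A ⊆ sideB ∧ B ⊆ sideT) ∨ (A ⊆ sideT ∧ B ⊆ sideB)

/-!
The supports of two measures on `Q` are pairwise at distance `2 = diam Q` exactly when the measures
are at Wasserstein distance `2`. Hence, if `A` and `B` are the unions of the supports of the images
of all measures carried by two opposite sides, every point of `A` is at distance `2` from every
point of `B`. Swapping quantifiers over the two coordinates, either `A` and `B` lie in two opposite
sides, or one of them has at most two points. The latter is impossible: the Wasserstein space over
two points is isometric to an interval with metric `c |s - t| ^ (1 / p)`, where no three distinct
points are at the same distance from a fourth one, whereas on a side the two endpoints and their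
even mixture are all at distance `1` from the midpoint.
-/

section Couplings

variable {X : Type*} [MeasurableSpace X] {μ ν : Measure X} {π : Measure (X × X)} {p : ℝ}

/-- `π` is a coupling (transport plan) of `μ` and `ν`. -/
def IsCoupling (μ ν : Measure X) (π : Measure (X × X)) : Prop :=
  π.map Prod.fst = μ ∧ π.map Prod.snd = ν

namespace IsCoupling

lemma prod (μ ν : Measure X) [IsProbabilityMeasure μ] [IsProbabilityMeasure ν] :
    IsCoupling μ ν (μ.prod ν) := by
  simp [IsCoupling]

lemma ae_fst (hπ : IsCoupling μ ν π) {P : X → Prop} (h : ∀ᵐ x ∂μ, P x) : ∀ᵐ q ∂π, P q.1 :=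
  ae_of_ae_map measurable_fst.aemeasurable (hπ.1 ▸ h)

lemma ae_snd (hπ : IsCoupling μ ν π) {P : X → Prop} (h : ∀ᵐ x ∂ν, P x) : ∀ᵐ q ∂π, P q.2 :=
  ae_of_ae_map measurable_snd.aemeasurable (hπ.2 ▸ h)

lemma isProbabilityMeasure [IsProbabilityMeasure μ] (hπ : IsCoupling μ ν π) :
    IsProbabilityMeasure π :=
  have : IsProbabilityMeasure (π.map Prod.fst) := hπ.1 ▸ inferInstance
  Measure.isProbabilityMeasure_of_map Prod.fst

end IsCoupling

variable [PseudoMetricSpace X]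

/-- The `p`-th power cost `∬ d(x,y)^p dπ` of a transport plan, so that `Wdist p μ ν` is the infimum
of `transportCost p π ^ (1 / p)` over the couplings `π` of `μ` and `ν`. -/
noncomputable def transportCost (p : ℝ) (π : Measure (X × X)) : ENNReal :=
  ∫⁻ q, edist q.1 q.2 ^ p ∂π

lemma Wdist_le_of_isCoupling (hp : 0 ≤ p) (hπ : IsCoupling μ ν π) (hfin : transportCost p π ≠ ⊤) :
    Wdist p μ ν ≤ (transportCost p π).toReal ^ (1 / p) := by
  rw [ENNReal.toReal_rpow]
  exact ENNReal.toReal_mono (ENNReal.rpow_ne_top_of_nonneg (by positivity) hfin)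
    (iInf₂_le π hπ)

lemma Wdist_eq_of_isCoupling_of_forall_le (hp : 0 ≤ p) (hπ : IsCoupling μ ν π)
    (hmin : ∀ π', IsCoupling μ ν π' → transportCost p π ≤ transportCost p π') :
    Wdist p μ ν = (transportCost p π).toReal ^ (1 / p) := by
  rw [ENNReal.toReal_rpow]
  refine congrArg ENNReal.toReal (le_antisymm (iInf₂_le π hπ) (le_iInf₂ fun π' hπ' => ?_))
  exact ENNReal.rpow_le_rpow (hmin π' hπ') (by positivity)

lemma mem_WSet_iff [BoundedSpace X] (hp : 0 ≤ p) : μ ∈ WSet X p ↔ IsProbabilityMeasure μ := by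
  refine ⟨And.left, fun hμ => ⟨hμ, ?_⟩⟩
  obtain ⟨x₀⟩ := μ.nonempty_of_neZero
  obtain ⟨C, hC⟩ := Metric.boundedSpace_iff_edist.1 ‹BoundedSpace X›
  refine ⟨x₀, ?_⟩
  calc ∫⁻ x, edist x x₀ ^ p ∂μ ≤ ∫⁻ _, (C : ENNReal) ^ p ∂μ :=
        lintegral_mono fun x => ENNReal.rpow_le_rpow (hC x x₀) hp
    _ < ⊤ := by
        rw [lintegral_const, measure_univ, mul_one]
        exact ENNReal.rpow_lt_top_of_nonneg hp ENNReal.coe_ne_top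

end Couplings

section ConstantDistance

variable {X : Type*} [MeasurableSpace X] [PseudoMetricSpace X] {μ ν : Measure X} {p D : ℝ}

lemma transportCost_eq_of_ae_dist_eq {π : Measure (X × X)} [IsProbabilityMeasure π]
    (h : ∀ᵐ q ∂π, dist q.1 q.2 = D) : transportCost p π = ENNReal.ofReal D ^ p := by
  have hcongr : (fun q : X × X => edist q.1 q.2 ^ p) =ᵐ[π] fun _ => ENNReal.ofReal D ^ p := by
    filter_upwards [h] with q hq
    rw [edist_dist, hq]
  rw [transportCost, lintegral_congr_ae hcongr, lintegral_const, measure_univ, mul_one]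

lemma Wdist_eq_of_forall_dist_eq [IsProbabilityMeasure μ] [IsProbabilityMeasure ν] (hp : 0 < p)
    {S T : Set X} (hμ : ∀ᵐ x ∂μ, x ∈ S) (hν : ∀ᵐ y ∂ν, y ∈ T)
    (hST : ∀ x ∈ S, ∀ y ∈ T, dist x y = D) : Wdist p μ ν = D := by
  have hcost (π) (hπ : IsCoupling μ ν π) : transportCost p π = ENNReal.ofReal D ^ p := by
    have := hπ.isProbabilityMeasure
    apply transportCost_eq_of_ae_dist_eq
    filter_upwards [hπ.ae_fst hμ, hπ.ae_snd hν] with q hq₁ hq₂ using hST _ hq₁ _ hq₂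
  have hD : 0 ≤ D := by
    obtain ⟨x, hx⟩ := hμ.exists
    obtain ⟨y, hy⟩ := hν.exists
    exact hST x hx y hy ▸ dist_nonneg
  have hprod := IsCoupling.prod μ ν
  rw [Wdist_eq_of_isCoupling_of_forall_le hp.le hprod
    fun π hπ => (hcost _ hprod).trans_le (hcost π hπ).ge, hcost _ hprod, ← ENNReal.toReal_rpow,
    ENNReal.toReal_ofReal hD, one_div, Real.rpow_rpow_inv hD hp.ne']

lemma ae_prod_le_dist_of_le_Wdist [IsProbabilityMeasure μ] [IsProbabilityMeasure ν] (hp : 0 < p)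
    (hdist : ∀ x y : X, dist x y ≤ D) (h : D ≤ Wdist p μ ν) :
    ∀ᵐ q ∂μ.prod ν, D ≤ dist q.1 q.2 := by
  have hpow (q : X × X) : edist q.1 q.2 ^ p ≤ ENNReal.ofReal D ^ p := by
    rw [edist_dist]
    exact ENNReal.rpow_le_rpow (ENNReal.ofReal_le_ofReal (hdist _ _)) hp.le
  have hconst : ∫⁻ _, ENNReal.ofReal D ^ p ∂μ.prod ν = ENNReal.ofReal D ^ p := by simp
  have hfin : transportCost p (μ.prod ν) ≠ ⊤ :=
    ((lintegral_mono hpow).trans_lt (hconst.trans_lt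
      (ENNReal.rpow_lt_top_of_nonneg hp.le ENNReal.ofReal_ne_top))).ne
  have hcost : ENNReal.ofReal D ^ p ≤ transportCost p (μ.prod ν) := by
    rw [← ENNReal.le_rpow_inv_iff hp, ← one_div]
    refine ENNReal.ofReal_le_of_le_toReal ?_
    rw [← ENNReal.toReal_rpow]
    exact h.trans (Wdist_le_of_isCoupling hp.le (.prod μ ν) hfin)
  filter_upwards [ae_eq_of_ae_le_of_lintegral_le (.of_forall hpow) hfin aemeasurable_const
    (hconst.trans_le hcost)] with q hq
  have hle : ENNReal.ofReal D ≤ edist q.1 q.2 := (ENNReal.rpow_le_rpow_iff hp).1 hq.ge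
  rwa [edist_dist, ENNReal.ofReal_le_ofReal_iff dist_nonneg] at hle

end ConstantDistance

section Support

variable {X : Type*} [TopologicalSpace X] [MeasurableSpace X] {μ ν : Measure X}

lemma msupport_eq_support (μ : Measure X) : msupport μ = μ.support := by
  simp only [Measure.support_eq_forall_isOpen, msupport, pos_iff_ne_zero]
  grind

lemma ae_mem_of_msupport_subset [HereditarilyLindelofSpace X] {S : Set X} (h : msupport μ ⊆ S) :
    ∀ᵐ x ∂μ, x ∈ S :=
  Filter.mem_of_superset Measure.support_mem_ae (msupport_eq_support μ ▸ h)

lemma mem_of_ae_prod_of_mem_msupport [SFinite ν] {K : Set (X × X)} (hK : IsClosed K)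
    (h : ∀ᵐ q ∂μ.prod ν, q ∈ K) {x y : X} (hx : x ∈ msupport μ) (hy : y ∈ msupport ν) :
    (x, y) ∈ K := by
  by_contra hxy
  obtain ⟨U, V, hU, hV, hxU, hyV, hUV⟩ := isOpen_prod_iff.1 hK.isOpen_compl x y hxy
  have hnull : μ.prod ν (U ×ˢ V) = 0 := measure_mono_null hUV h
  rw [Measure.prod_prod] at hnull
  exact mul_ne_zero (hx U hU hxU) (hy V hV hyV) hnull

end Support

lemma dist_eq_of_Wdist_eq {X : Type*} [MeasurableSpace X] [PseudoMetricSpace X]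
    {μ ν : Measure X} [IsProbabilityMeasure μ] [IsProbabilityMeasure ν] {p D : ℝ} (hp : 0 < p)
    (hdist : ∀ x y : X, dist x y ≤ D) (h : Wdist p μ ν = D) {x y : X}
    (hx : x ∈ msupport μ) (hy : y ∈ msupport ν) : dist x y = D :=
  (hdist x y).antisymm <| mem_of_ae_prod_of_mem_msupport (K := {q | D ≤ dist q.1 q.2})
    (isClosed_le continuous_const continuous_dist)
    (ae_prod_le_dist_of_le_Wdist hp hdist h.ge) hx hy

/-- The set of probability measures carried by `S`. It is defined by an almost-everywhere condition
rather than by `msupport`, so that no topology on `X` is needed. -/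
def probOn {X : Type*} [MeasurableSpace X] (S : Set X) : Set (Measure X) :=
  {μ | IsProbabilityMeasure μ ∧ ∀ᵐ x ∂μ, x ∈ S}

lemma probOn_mono {X : Type*} [MeasurableSpace X] {S T : Set X} (h : S ⊆ T) :
    probOn S ⊆ probOn T :=
  fun _ hμ => ⟨hμ.1, hμ.2.mono fun _ hx => h hx⟩

section TwoPoints

variable {X : Type*} [MeasurableSpace X] [MeasurableSingletonClass X] {μ ν : Measure X} {x y : X}

lemma dirac_mem_probOn {S : Set X} (hx : x ∈ S) : Measure.dirac x ∈ probOn S :=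
  ⟨inferInstance, by simpa [ae_dirac_eq] using hx⟩

lemma eq_smul_dirac_add_smul_dirac (hxy : x ≠ y) (h : ∀ᵐ z ∂μ, z ∈ ({x, y} : Set X)) :
    μ = μ {x} • Measure.dirac x + μ {y} • Measure.dirac y := by
  conv_lhs => rw [← Measure.restrict_eq_self_of_ae_mem h, Set.insert_eq,
    Measure.restrict_union (by simpa using hxy) (measurableSet_singleton y),
    Measure.restrict_singleton, Measure.restrict_singleton]

lemma measure_singleton_right_eq_one_sub (hxy : x ≠ y) (hμ : μ ∈ probOn {x, y}) :
    μ {y} = 1 - μ {x} := by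
  have := hμ.1
  rw [← prob_compl_eq_one_sub (measurableSet_singleton x)]
  refine measure_congr (Filter.eventuallyEq_set.2 ?_)
  filter_upwards [hμ.2] with z hz
  grind

variable [PseudoMetricSpace X] {π : Measure (X × X)} {p : ℝ}

lemma edist_rpow_mul_sub_le_transportCost (hμ : ∀ᵐ z ∂μ, z ∈ ({x, y} : Set X))
    (hπ : IsCoupling μ ν π) : edist y x ^ p * (ν {x} - μ {x}) ≤ transportCost p π := by
  have hmass : ν {x} ≤ μ {x} + π {(y, x)} := by
    rw [← hπ.1, ← hπ.2, Measure.map_apply measurable_fst (measurableSet_singleton x),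
      Measure.map_apply measurable_snd (measurableSet_singleton x)]
    refine (measure_mono_ae ?_).trans (measure_union_le _ _)
    filter_upwards [hπ.ae_fst hμ] with q hq hqx
    exact hq.imp_right fun hqy => Prod.ext hqy hqx
  calc edist y x ^ p * (ν {x} - μ {x})
      ≤ edist y x ^ p * π {(y, x)} := by gcongr; exact tsub_le_iff_left.2 hmass
    _ = ∫⁻ q in {(y, x)}, edist q.1 q.2 ^ p ∂π := by rw [lintegral_singleton]
    _ ≤ transportCost p π := setLIntegral_le_lintegral _ _

lemma exists_isCoupling_transportCost_eq (hp : 0 < p) (hxy : x ≠ y) (hμ : μ ∈ probOn {x, y})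
    (hν : ν ∈ probOn {x, y}) (hle : μ {x} ≤ ν {x}) :
    ∃ π, IsCoupling μ ν π ∧ transportCost p π = edist y x ^ p * (ν {x} - μ {x}) := by
  have hy : μ {y} = (ν {x} - μ {x}) + ν {y} := by
    have := hν.1
    rw [measure_singleton_right_eq_one_sub hxy hμ, measure_singleton_right_eq_one_sub hxy hν,
      add_comm, tsub_add_tsub_cancel prob_le_one hle]
  refine ⟨μ {x} • Measure.dirac (x, x) + (ν {x} - μ {x}) • Measure.dirac (y, x)
    + ν {y} • Measure.dirac (y, y), ⟨?_, ?_⟩, ?_⟩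
  · simp only [Measure.map_add _ _ measurable_fst, Measure.map_smul,
      Measure.map_dirac' measurable_fst]
    conv_rhs => rw [eq_smul_dirac_add_smul_dirac hxy hμ.2, hy, add_smul, ← add_assoc]
  · simp only [Measure.map_add _ _ measurable_snd, Measure.map_smul,
      Measure.map_dirac' measurable_snd]
    conv_rhs => rw [eq_smul_dirac_add_smul_dirac hxy hν.2]
    rw [← add_smul, add_tsub_cancel_of_le hle]
  · simp [transportCost, hp, mul_comm]

lemma Wdist_eq_of_mem_probOn_pair_of_le (hp : 0 < p) (hxy : x ≠ y) (hμ : μ ∈ probOn {x, y})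
    (hν : ν ∈ probOn {x, y}) (hle : μ {x} ≤ ν {x}) :
    Wdist p μ ν = dist x y * |μ.real {x} - ν.real {x}| ^ (1 / p) := by
  have := hμ.1
  have := hν.1
  obtain ⟨π, hπ, hcost⟩ := exists_isCoupling_transportCost_eq hp hxy hμ hν hle
  have hsub : 0 ≤ ν.real {x} - μ.real {x} :=
    sub_nonneg.2 (ENNReal.toReal_mono (measure_ne_top ν _) hle)
  calc Wdist p μ ν = (edist y x ^ p * (ν {x} - μ {x})).toReal ^ (1 / p) := by
        rw [← hcost]
        exact Wdist_eq_of_isCoupling_of_forall_le hp.le hπ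
          fun π' hπ' => hcost.trans_le (edist_rpow_mul_sub_le_transportCost hμ.2 hπ')
    _ = (dist y x ^ p * (ν.real {x} - μ.real {x})) ^ (1 / p) := by
        rw [ENNReal.toReal_mul, ← ENNReal.toReal_rpow, ← dist_edist,
          ENNReal.toReal_sub_of_le hle (measure_ne_top ν _), measureReal_def, measureReal_def]
    _ = dist x y * |μ.real {x} - ν.real {x}| ^ (1 / p) := by
        rw [Real.mul_rpow (by positivity) hsub, one_div, Real.rpow_rpow_inv dist_nonneg hp.ne',
          dist_comm, abs_sub_comm, abs_of_nonneg hsub]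

lemma Wdist_eq_of_mem_probOn_pair (hp : 0 < p) (hμ : μ ∈ probOn {x, y}) (hν : ν ∈ probOn {x, y}) :
    Wdist p μ ν = dist x y * |μ.real {x} - ν.real {x}| ^ (1 / p) := by
  have := hμ.1
  have := hν.1
  obtain rfl | hxy := eq_or_ne x y
  · rw [Set.pair_eq_singleton] at hμ hν
    rw [dist_self, zero_mul]
    exact Wdist_eq_of_forall_dist_eq hp hμ.2 hν.2 (by simp)
  · rcases le_total (μ {x}) (ν {x}) with hle | hle
    · exact Wdist_eq_of_mem_probOn_pair_of_le hp hxy hμ hν hle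
    · have hμy := measure_singleton_right_eq_one_sub hxy hμ
      have hνy := measure_singleton_right_eq_one_sub hxy hν
      have habs : |μ.real {y} - ν.real {y}| = |μ.real {x} - ν.real {x}| := by
        simp only [measureReal_def, hμy, hνy,
          ENNReal.toReal_sub_of_le prob_le_one ENNReal.one_ne_top, sub_sub_sub_cancel_left,
          abs_sub_comm]
      rw [← habs, dist_comm]
      rw [Set.pair_comm] at hμ hν
      exact Wdist_eq_of_mem_probOn_pair_of_le hp hxy.symm hμ hν
        (hμy ▸ hνy ▸ tsub_le_tsub_left hle 1)

lemma Wdist_eq_zero_of_equidistant (hp : 0 < p) {σ ν₁ ν₂ ν₃ : Measure X} (hσ : σ ∈ probOn {x, y})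
    (hν₁ : ν₁ ∈ probOn {x, y}) (hν₂ : ν₂ ∈ probOn {x, y}) (hν₃ : ν₃ ∈ probOn {x, y})
    (h₁₂ : Wdist p σ ν₁ = Wdist p σ ν₂) (h₁₃ : Wdist p σ ν₁ = Wdist p σ ν₃) :
    Wdist p ν₁ ν₂ = 0 ∨ Wdist p ν₁ ν₃ = 0 ∨ Wdist p ν₂ ν₃ = 0 := by
  rw [Wdist_eq_of_mem_probOn_pair hp hσ hν₁, Wdist_eq_of_mem_probOn_pair hp hσ hν₂] at h₁₂
  rw [Wdist_eq_of_mem_probOn_pair hp hσ hν₁, Wdist_eq_of_mem_probOn_pair hp hσ hν₃] at h₁₃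
  rw [Wdist_eq_of_mem_probOn_pair hp hν₁ hν₂, Wdist_eq_of_mem_probOn_pair hp hν₁ hν₃,
    Wdist_eq_of_mem_probOn_pair hp hν₂ hν₃]
  obtain hd | hd := eq_or_ne (dist x y) 0
  · simp [hd]
  have abs_eq_abs_of_eq {s t : ℝ} (h : dist x y * |σ.real {x} - s| ^ (1 / p) =
      dist x y * |σ.real {x} - t| ^ (1 / p)) : |σ.real {x} - s| = |σ.real {x} - t| :=
    (Real.rpow_left_inj (abs_nonneg _) (abs_nonneg _) (by positivity)).1 (mul_left_cancel₀ hd h)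
  have mul_eq_zero_of_eq {s t : ℝ} (h : s = t) : dist x y * |s - t| ^ (1 / p) = 0 := by
    rw [h, sub_self, abs_zero, Real.zero_rpow (by positivity), mul_zero]
  rcases abs_eq_abs.1 (abs_eq_abs_of_eq h₁₂) with h | h
  · exact .inl (mul_eq_zero_of_eq (by linarith))
  rcases abs_eq_abs.1 (abs_eq_abs_of_eq h₁₃) with h' | h'
  · exact .inr (.inl (mul_eq_zero_of_eq (by linarith)))
  · exact .inr (.inr (mul_eq_zero_of_eq (by linarith)))

end TwoPoints

lemma exists_subset_pair_of_encard_le_two {α : Type*} [Nonempty α] {s : Set α}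
    (hs : s.encard ≤ 2) : ∃ x y, s ⊆ {x, y} := by
  obtain rfl | ⟨x, hx⟩ := s.eq_empty_or_nonempty
  · simp
  have hdiff : (s \ {x}).encard ≤ 1 := by
    rw [← Set.encard_sdiff_singleton_add_one hx, ← one_add_one_eq_two] at hs
    exact (ENat.add_le_add_iff_right ENat.one_ne_top).1 hs
  obtain hempty | ⟨y, hy⟩ := Set.encard_le_one_iff_eq.1 hdiff
  · exact ⟨x, x, by simpa [Set.sdiff_eq_empty] using hempty⟩
  · exact ⟨x, y, by grind⟩

lemma encard_le_two_of_disjoint {α : Type*} {A B C : Set α} (hC : C.encard ≤ 4) (hA : A ⊆ C)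
    (hB : B ⊆ C) (hAB : Disjoint A B) : A.encard ≤ 2 ∨ B.encard ≤ 2 := by
  by_contra! h
  have hA₃ : 3 ≤ A.encard := Order.add_one_le_of_lt h.1
  have hB₃ : 3 ≤ B.encard := Order.add_one_le_of_lt h.2
  have hle : A.encard + B.encard ≤ 4 :=
    Set.encard_union_eq hAB ▸ (Set.encard_le_encard (Set.union_subset hA hB)).trans hC
  exact absurd ((add_le_add hA₃ hB₃).trans hle) (by decide)

section ImageSupport

variable {X Y : Type*} [MeasurableSpace X] [MeasurableSpace Y] {S T : Set X}
  {Φ : Measure X → Measure Y} {p : ℝ}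

/-- The union of the supports of the images under `Φ` of the probability measures carried by `S`.
Unlike the support of a single image, it cannot be as small as two points when `Φ` is an isometry
and `S` a side of the square. -/
def imageSupport [TopologicalSpace Y] (Φ : Measure X → Measure Y) (S : Set X) : Set Y :=
  ⋃ σ ∈ probOn S, msupport (Φ σ)

lemma msupport_subset_imageSupport [TopologicalSpace Y] {σ : Measure X} (hσ : σ ∈ probOn S) :
    msupport (Φ σ) ⊆ imageSupport Φ S :=
  Set.subset_biUnion_of_mem (u := fun σ => msupport (Φ σ)) hσ

/-- `S` contains a point at the same distance from two distinct points of `S`. This is the only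
property of the sides of the square needed to bound their image supports from below. -/
def HasEquidistantPoint [PseudoMetricSpace X] (S : Set X) : Prop :=
  ∃ m ∈ S, ∃ u ∈ S, ∃ v ∈ S, u ≠ v ∧ dist m u = dist m v

lemma dist_eq_of_mem_imageSupport [PseudoMetricSpace X] [PseudoMetricSpace Y] {D : ℝ} (hp : 0 < p)
    (hdist : ∀ x y : Y, dist x y ≤ D) (hST : ∀ x ∈ S, ∀ y ∈ T, dist x y = D)
    (hΦ : ∀ σ, IsProbabilityMeasure σ → IsProbabilityMeasure (Φ σ))
    (hiso : ∀ σ, IsProbabilityMeasure σ → ∀ τ, IsProbabilityMeasure τ →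
      Wdist p (Φ σ) (Φ τ) = Wdist p σ τ)
    {x y : Y} (hx : x ∈ imageSupport Φ S) (hy : y ∈ imageSupport Φ T) : dist x y = D := by
  simp only [imageSupport, Set.mem_iUnion, exists_prop] at hx hy
  obtain ⟨σ, ⟨hσ, hσS⟩, hx⟩ := hx
  obtain ⟨τ, ⟨hτ, hτT⟩, hy⟩ := hy
  have := hΦ σ hσ
  have := hΦ τ hτ
  exact dist_eq_of_Wdist_eq hp hdist
    ((hiso σ hσ τ hτ).trans (Wdist_eq_of_forall_dist_eq hp hσS hτT hST)) hx hy

/-- The even mixture of the Dirac masses at `u` and `v`: a third measure at the same distance from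
`dirac m` when `m` is equidistant from `u` and `v`. -/
noncomputable def diracMixture (u v : X) : Measure X :=
  (2⁻¹ : ENNReal) • Measure.dirac u + (2⁻¹ : ENNReal) • Measure.dirac v

variable [MeasurableSingletonClass X]

lemma diracMixture_mem_probOn (u v : X) : diracMixture u v ∈ probOn {u, v} :=
  ⟨⟨by simp [diracMixture, ENNReal.inv_two_add_inv_two]⟩, by
    simp [diracMixture, ae_dirac_eq]⟩

lemma diracMixture_real_singleton_left {u v : X} (huv : u ≠ v) :
    (diracMixture u v).real {u} = 2⁻¹ := by
  simp [diracMixture, measureReal_def, huv.symm]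

variable [MetricSpace X]

lemma not_forall_map_mem_probOn_pair [PseudoMetricSpace Y] [MeasurableSingletonClass Y]
    (hp : 0 < p) (hS : HasEquidistantPoint S)
    (hiso : ∀ σ ∈ probOn S, ∀ τ ∈ probOn S, Wdist p (Φ σ) (Φ τ) = Wdist p σ τ) (x y : Y) :
    ¬ ∀ σ ∈ probOn S, Φ σ ∈ probOn {x, y} := by
  intro hΦ
  obtain ⟨m, hm, u, hu, v, hv, huv, hdist⟩ := hS
  have hsub : ({u, v} : Set X) ⊆ S := Set.pair_subset hu hv
  have hδm : Measure.dirac m ∈ probOn S := dirac_mem_probOn hm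
  have hδu : Measure.dirac u ∈ probOn {u, v} := dirac_mem_probOn (.inl rfl)
  have hδv : Measure.dirac v ∈ probOn {u, v} := dirac_mem_probOn (.inr rfl)
  have hmix : diracMixture u v ∈ probOn {u, v} := diracMixture_mem_probOn u v
  have hequi (σ) (hσ : σ ∈ probOn {u, v}) :
      Wdist p (Φ (.dirac m)) (Φ σ) = dist m u := by
    have := hσ.1
    rw [hiso _ hδm _ (probOn_mono hsub hσ)]
    exact Wdist_eq_of_forall_dist_eq hp (dirac_mem_probOn (Set.mem_singleton m)).2 hσ.2
      (by simp [hdist])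
  have hne {σ τ : Measure X} (hσ : σ ∈ probOn {u, v}) (hτ : τ ∈ probOn {u, v})
      (h : σ.real {u} ≠ τ.real {u}) : Wdist p (Φ σ) (Φ τ) ≠ 0 := by
    rw [hiso _ (probOn_mono hsub hσ) _ (probOn_mono hsub hτ), Wdist_eq_of_mem_probOn_pair hp hσ hτ]
    have := dist_pos.2 huv
    have := abs_pos.2 (sub_ne_zero.2 h)
    positivity
  have hu₁ : (Measure.dirac u).real {u} = 1 := by simp [measureReal_def]
  have hv₀ : (Measure.dirac v).real {u} = 0 := by simp [measureReal_def, huv.symm]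
  have hmix₂ := diracMixture_real_singleton_left huv
  rcases Wdist_eq_zero_of_equidistant hp (hΦ _ hδm) (hΦ _ (probOn_mono hsub hδu))
      (hΦ _ (probOn_mono hsub hδv)) (hΦ _ (probOn_mono hsub hmix))
      ((hequi _ hδu).trans (hequi _ hδv).symm) ((hequi _ hδu).trans (hequi _ hmix).symm)
    with h | h | h
  · exact hne hδu hδv (by norm_num [hu₁, hv₀]) h
  · exact hne hδu hmix (by norm_num [hu₁, hmix₂]) h
  · exact hne hδv hmix (by norm_num [hv₀, hmix₂]) h

lemma two_lt_encard_imageSupport [PseudoMetricSpace Y] [MeasurableSingletonClass Y]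
    [HereditarilyLindelofSpace Y] (hp : 0 < p) (hS : HasEquidistantPoint S)
    (hΦ : ∀ σ, IsProbabilityMeasure σ → IsProbabilityMeasure (Φ σ))
    (hiso : ∀ σ, IsProbabilityMeasure σ → ∀ τ, IsProbabilityMeasure τ →
      Wdist p (Φ σ) (Φ τ) = Wdist p σ τ) : 2 < (imageSupport Φ S).encard := by
  have : Nonempty Y := by
    obtain ⟨m, -⟩ := hS
    have := hΦ (.dirac m) inferInstance
    exact (Φ (.dirac m)).nonempty_of_neZero
  by_contra! hle
  obtain ⟨x, y, hxy⟩ := exists_subset_pair_of_encard_le_two hle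
  refine not_forall_map_mem_probOn_pair hp hS (fun σ hσ τ hτ => hiso σ hσ.1 τ hτ.1) x y
    fun σ hσ => ⟨hΦ σ hσ.1, ae_mem_of_msupport_subset ?_⟩
  exact (msupport_subset_imageSupport hσ).trans hxy

end ImageSupport

section Coordinates

lemma mul_eq_neg_one_iff_of_abs_le_one {s t : ℝ} (hs : |s| ≤ 1) (ht : |t| ≤ 1) :
    s * t = -1 ↔ s = -1 ∧ t = 1 ∨ s = 1 ∧ t = -1 := by
  refine ⟨fun h => ?_, by rintro (⟨rfl, rfl⟩ | ⟨rfl, rfl⟩) <;> norm_num⟩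
  rw [abs_le] at hs ht
  have hsum : s + t = 0 := by
    have : 0 ≤ (1 + s) * (1 + t) := mul_nonneg (by linarith) (by linarith)
    have : 0 ≤ (1 - s) * (1 - t) := mul_nonneg (by linarith) (by linarith)
    linarith
  obtain rfl : t = -s := by linarith
  rw [mul_neg, neg_inj] at h
  rcases mul_self_eq_one_iff.1 h with rfl | rfl <;> norm_num

lemma abs_sub_eq_two_iff_of_abs_le_one {s t : ℝ} (hs : |s| ≤ 1) (ht : |t| ≤ 1) :
    |s - t| = 2 ↔ s * t = -1 := by
  rw [mul_eq_neg_one_iff_of_abs_le_one hs ht, abs_eq zero_le_two]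
  grind

lemma abs_sub_le_two_of_abs_le_one {s t : ℝ} (hs : |s| ≤ 1) (ht : |t| ≤ 1) : |s - t| ≤ 2 :=
  (abs_sub s t).trans (by linarith)

lemma forall_mul_eq_neg_one_or_subsingleton {α : Type*} {f g : α → ℝ} {A B : Set α}
    (hfg : Function.Injective fun x => (f x, g x))
    (h : ∀ a ∈ A, ∀ b ∈ B, f a * f b = -1 ∨ g a * g b = -1)
    {a₀ : α} (ha₀ : a₀ ∈ A) (hf : ∀ b ∈ B, f a₀ * f b ≠ -1) :
    (∀ a ∈ A, ∀ b ∈ B, g a * g b = -1) ∨ B.Subsingleton := by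
  have hg (b) (hb : b ∈ B) : g a₀ * g b = -1 := (h a₀ ha₀ b hb).resolve_left (hf b hb)
  have eq_of_mul_eq {s t t' : ℝ} (ht : s * t = -1) (ht' : s * t' = -1) : t = t' :=
    mul_left_cancel₀ (by rintro rfl; simp at ht) (ht.trans ht'.symm)
  refine or_iff_not_imp_left.2 fun hne b hb b' hb' => hfg (Prod.ext ?_ ?_)
  · push Not at hne
    obtain ⟨a, ha, c, hc, hac⟩ := hne
    have hfa (d) (hd : d ∈ B) : f a * f d = -1 :=
      (h a ha d hd).resolve_right (eq_of_mul_eq (hg c hc) (hg d hd) ▸ hac)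
    exact eq_of_mul_eq (hfa b hb) (hfa b' hb')
  · exact eq_of_mul_eq (hg b hb) (hg b' hb')

lemma forall_eq_neg_one_and_forall_eq_one_of_forall_mul_eq_neg_one {α : Type*} {f : α → ℝ}
    (hf : ∀ x, |f x| ≤ 1) {A B : Set α} (hA : A.Nonempty) (hB : B.Nonempty)
    (h : ∀ a ∈ A, ∀ b ∈ B, f a * f b = -1) :
    (∀ a ∈ A, f a = -1) ∧ (∀ b ∈ B, f b = 1) ∨ (∀ a ∈ A, f a = 1) ∧ (∀ b ∈ B, f b = -1) := by
  obtain ⟨a₀, ha₀⟩ := hA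
  obtain ⟨b₀, hb₀⟩ := hB
  have hval (a) (ha : a ∈ A) (b) (hb : b ∈ B) :=
    (mul_eq_neg_one_iff_of_abs_le_one (hf a) (hf b)).1 (h a ha b hb)
  rcases hval a₀ ha₀ b₀ hb₀ with ⟨ha, hb⟩ | ⟨ha, hb⟩
  · exact .inl ⟨fun a ha' => by grind, fun b hb' => by grind⟩
  · exact .inr ⟨fun a ha' => by grind, fun b hb' => by grind⟩

end Coordinates

section Square

namespace Qs

lemma abs_fst_le_one (x : ↥Qs) : |x.1.1| ≤ 1 :=
  abs_le.2 ⟨x.2.1.1, x.2.2.1⟩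

lemma abs_snd_le_one (x : ↥Qs) : |x.1.2| ≤ 1 :=
  abs_le.2 ⟨x.2.1.2, x.2.2.2⟩

lemma dist_eq_max (x y : ↥Qs) : dist x y = max |x.1.1 - y.1.1| |x.1.2 - y.1.2| := rfl

lemma dist_le_two (x y : ↥Qs) : dist x y ≤ 2 :=
  max_le (abs_sub_le_two_of_abs_le_one (abs_fst_le_one x) (abs_fst_le_one y))
    (abs_sub_le_two_of_abs_le_one (abs_snd_le_one x) (abs_snd_le_one y))

lemma dist_eq_two_iff {x y : ↥Qs} :
    dist x y = 2 ↔ x.1.1 * y.1.1 = -1 ∨ x.1.2 * y.1.2 = -1 := by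
  rw [← abs_sub_eq_two_iff_of_abs_le_one (abs_fst_le_one x) (abs_fst_le_one y),
    ← abs_sub_eq_two_iff_of_abs_le_one (abs_snd_le_one x) (abs_snd_le_one y)]
  have h₁ := abs_sub_le_two_of_abs_le_one (abs_fst_le_one x) (abs_fst_le_one y)
  have h₂ := abs_sub_le_two_of_abs_le_one (abs_snd_le_one x) (abs_snd_le_one y)
  rw [dist_eq_max]
  grind

end Qs

/-- The set of the four corners of `Q`, where sets at mutual distance `2` may fail to lie in
opposite sides. -/
def corners : Set ↥Qs := {x | (x.1.1 = -1 ∨ x.1.1 = 1) ∧ (x.1.2 = -1 ∨ x.1.2 = 1)}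

lemma encard_corners_le : corners.encard ≤ 4 := by
  have himage : Subtype.val '' corners ⊆ ({-1, 1} : Set ℝ) ×ˢ ({-1, 1} : Set ℝ) := by
    rintro _ ⟨x, hx, rfl⟩
    exact hx
  have hpair : ({-1, 1} : Set ℝ).encard = 2 := Set.encard_pair (by norm_num)
  calc corners.encard = (Subtype.val '' corners).encard :=
        (Subtype.val_injective.encard_image _).symm
    _ ≤ (({-1, 1} : Set ℝ) ×ˢ ({-1, 1} : Set ℝ)).encard := Set.encard_le_encard himage
    _ = 4 := by rw [Set.encard_prod, hpair]; norm_num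

variable {A B : Set ↥Qs}

namespace OppSides

lemma symm (h : OppSides A B) : OppSides B A := by
  unfold OppSides at *
  tauto

lemma mono {A' B' : Set ↥Qs} (h : OppSides A B) (hA : A' ⊆ A) (hB : B' ⊆ B) : OppSides A' B' :=
  h.imp (.imp hA.trans hB.trans) <| .imp (.imp hA.trans hB.trans) <|
    .imp (.imp hA.trans hB.trans) (.imp hA.trans hB.trans)

lemma dist_eq_two (h : OppSides A B) {a b : ↥Qs} (ha : a ∈ A) (hb : b ∈ B) : dist a b = 2 := by
  rw [Qs.dist_eq_two_iff]
  rcases h with ⟨hA, hB⟩ | ⟨hA, hB⟩ | ⟨hA, hB⟩ | ⟨hA, hB⟩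
  · exact .inl (by rw [hA ha, hB hb, mul_one])
  · exact .inl (by rw [hA ha, hB hb, one_mul])
  · exact .inr (by rw [hA ha, hB hb, mul_one])
  · exact .inr (by rw [hA ha, hB hb, one_mul])

end OppSides

lemma oppSides_of_forall_mul_fst_eq_neg_one (hA : A.Nonempty) (hB : B.Nonempty)
    (h : ∀ a ∈ A, ∀ b ∈ B, a.1.1 * b.1.1 = -1) : OppSides A B :=
  (forall_eq_neg_one_and_forall_eq_one_of_forall_mul_eq_neg_one Qs.abs_fst_le_one hA hB h).imp
    id .inl

lemma oppSides_of_forall_mul_snd_eq_neg_one (hA : A.Nonempty) (hB : B.Nonempty)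
    (h : ∀ a ∈ A, ∀ b ∈ B, a.1.2 * b.1.2 = -1) : OppSides A B :=
  .inr <| .inr <|
    forall_eq_neg_one_and_forall_eq_one_of_forall_mul_eq_neg_one Qs.abs_snd_le_one hA hB h

lemma oppSides_or_subsingleton_or_subset_corners (h : ∀ a ∈ A, ∀ b ∈ B, dist a b = 2) :
    OppSides A B ∨ B.Subsingleton ∨ A ⊆ corners := by
  obtain rfl | hA := A.eq_empty_or_nonempty
  · exact .inr (.inr (Set.empty_subset _))
  obtain rfl | hB := B.eq_empty_or_nonempty
  · exact .inr (.inl Set.subsingleton_empty)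
  have hmul (a) (ha : a ∈ A) (b) (hb : b ∈ B) := Qs.dist_eq_two_iff.1 (h a ha b hb)
  by_cases hfst : ∃ a ∈ A, ∀ b ∈ B, a.1.1 * b.1.1 ≠ -1
  · obtain ⟨a, ha, hab⟩ := hfst
    exact (forall_mul_eq_neg_one_or_subsingleton Subtype.val_injective hmul ha hab).imp
      (oppSides_of_forall_mul_snd_eq_neg_one hA hB) .inl
  by_cases hsnd : ∃ a ∈ A, ∀ b ∈ B, a.1.2 * b.1.2 ≠ -1
  · obtain ⟨a, ha, hab⟩ := hsnd
    exact (forall_mul_eq_neg_one_or_subsingleton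
      (Prod.swap_injective.comp Subtype.val_injective)
      (fun a ha b hb => (hmul a ha b hb).symm) ha hab).imp
      (oppSides_of_forall_mul_fst_eq_neg_one hA hB) .inl
  push Not at hfst hsnd
  refine .inr (.inr fun a ha => ⟨?_, ?_⟩)
  · obtain ⟨b, -, hab⟩ := hfst a ha
    exact ((mul_eq_neg_one_iff_of_abs_le_one (Qs.abs_fst_le_one a) (Qs.abs_fst_le_one b)).1 hab).imp
      And.left And.left
  · obtain ⟨b, -, hab⟩ := hsnd a ha
    exact ((mul_eq_neg_one_iff_of_abs_le_one (Qs.abs_snd_le_one a) (Qs.abs_snd_le_one b)).1 hab).imp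
      And.left And.left

lemma oppSides_or_encard_le_two (h : ∀ a ∈ A, ∀ b ∈ B, dist a b = 2) :
    OppSides A B ∨ A.encard ≤ 2 ∨ B.encard ≤ 2 := by
  have hsub {S : Set ↥Qs} (hS : S.Subsingleton) : S.encard ≤ 2 :=
    (Set.encard_le_one_iff_subsingleton.2 hS).trans one_le_two
  rcases oppSides_or_subsingleton_or_subset_corners h with hAB | hB | hA
  · exact .inl hAB
  · exact .inr (.inr (hsub hB))
  rcases oppSides_or_subsingleton_or_subset_corners
      (fun b hb a ha => (dist_comm b a).trans (h a ha b hb)) with hBA | hA' | hB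
  · exact .inl hBA.symm
  · exact .inr (.inl (hsub hA'))
  have hdisj : Disjoint A B := Set.disjoint_left.2 fun a ha hb => by simpa using h a ha a hb
  exact .inr (encard_le_two_of_disjoint encard_corners_le hA hB hdisj)

lemma hasEquidistantPoint_setOf_fst_eq {s : ℝ} (hs : |s| ≤ 1) :
    HasEquidistantPoint {q : ↥Qs | q.1.1 = s} := by
  rw [abs_le] at hs
  exact ⟨⟨(s, 0), by simp [hs]⟩, rfl, ⟨(s, -1), by simp [hs]⟩, rfl, ⟨(s, 1), by simp [hs]⟩, rfl,
    by norm_num, by simp [Qs.dist_eq_max]⟩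

lemma hasEquidistantPoint_setOf_snd_eq {s : ℝ} (hs : |s| ≤ 1) :
    HasEquidistantPoint {q : ↥Qs | q.1.2 = s} := by
  rw [abs_le] at hs
  exact ⟨⟨(0, s), by simp [hs]⟩, rfl, ⟨(-1, s), by simp [hs]⟩, rfl, ⟨(1, s), by simp [hs]⟩, rfl,
    by norm_num, by simp [Qs.dist_eq_max]⟩

lemma OppSides.exists_superset (h : OppSides A B) : ∃ S T, A ⊆ S ∧ B ⊆ T ∧ OppSides S T ∧
    HasEquidistantPoint S ∧ HasEquidistantPoint T := by
  have hL : HasEquidistantPoint sideL := hasEquidistantPoint_setOf_fst_eq (by norm_num)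
  have hR : HasEquidistantPoint sideR := hasEquidistantPoint_setOf_fst_eq (by norm_num)
  have hB : HasEquidistantPoint sideB := hasEquidistantPoint_setOf_snd_eq (by norm_num)
  have hT : HasEquidistantPoint sideT := hasEquidistantPoint_setOf_snd_eq (by norm_num)
  rcases h with ⟨h₁, h₂⟩ | ⟨h₁, h₂⟩ | ⟨h₁, h₂⟩ | ⟨h₁, h₂⟩
  · exact ⟨sideL, sideR, h₁, h₂, .inl ⟨subset_rfl, subset_rfl⟩, hL, hR⟩
  · exact ⟨sideR, sideL, h₁, h₂, .inr (.inl ⟨subset_rfl, subset_rfl⟩), hR, hL⟩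
  · exact ⟨sideB, sideT, h₁, h₂, .inr (.inr (.inl ⟨subset_rfl, subset_rfl⟩)), hB, hT⟩
  · exact ⟨sideT, sideB, h₁, h₂, .inr (.inr (.inr ⟨subset_rfl, subset_rfl⟩)), hT, hB⟩

end Square

theorem isometry_preserves_opposite_sides_general (p : ℝ) (hp : 0 < p)
    (Φ : Measure ↥Qs → Measure ↥Qs) (hΦ : Set.MapsTo Φ (WSet ↥Qs p) (WSet ↥Qs p))
    (hiso : ∀ μ ∈ WSet ↥Qs p, ∀ ν ∈ WSet ↥Qs p, Wdist p (Φ μ) (Φ ν) = Wdist p μ ν)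
    (μ ν : Measure ↥Qs) (hμ : μ ∈ WSet ↥Qs p) (hν : ν ∈ WSet ↥Qs p)
    (h : OppSides (msupport μ) (msupport ν)) :
    OppSides (msupport (Φ μ)) (msupport (Φ ν)) := by
  obtain ⟨S, T, hμS, hνT, hST, hS, hT⟩ := h.exists_superset
  simp only [Set.MapsTo, mem_WSet_iff hp.le] at hΦ hiso hμ hν
  have hdist (x) (hx : x ∈ imageSupport Φ S) (y) (hy : y ∈ imageSupport Φ T) : dist x y = 2 :=
    dist_eq_of_mem_imageSupport hp Qs.dist_le_two (fun _ ha _ hb => hST.dist_eq_two ha hb) hΦ hiso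
      hx hy
  rcases oppSides_or_encard_le_two hdist with hopp | hcard | hcard
  · exact hopp.mono (msupport_subset_imageSupport ⟨hμ, ae_mem_of_msupport_subset hμS⟩)
      (msupport_subset_imageSupport ⟨hν, ae_mem_of_msupport_subset hνT⟩)
  · exact absurd hcard (two_lt_encard_imageSupport hp hS hΦ hiso).not_ge
  · exact absurd hcard (two_lt_encard_imageSupport hp hT hΦ hiso).not_ge

/-- An isometry of `𝒲_p(Q, d_m)` maps pairs of measures supported on opposite sides of
`Q` to pairs of measures supported on opposite sides of `Q`. -/
theorem isometry_preserves_opposite_sides (p : ℝ) (hp : 1 ≤ p)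
    (Φ : Measure ↥Qs → Measure ↥Qs) (hΦ : IsWIsometry ↥Qs p Φ)
    (μ ν : Measure ↥Qs) (hμ : μ ∈ WSet ↥Qs p) (hν : ν ∈ WSet ↥Qs p)
    (h : OppSides (msupport μ) (msupport ν)) :
    OppSides (msupport (Φ μ)) (msupport (Φ ν)) :=
  isometry_preserves_opposite_sides_general p (by linarith) Φ hΦ.1.mapsTo hΦ.2 μ ν hμ hν h
end
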